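/- arXiv:2202.12708 — 10 statements merged into one kernel-verified Lean document; each statement's English description precedes it below -/
import Mathlib

section
/- Let m₁, m₂, m₃ > 0, let U₁₂, U₂₃, U₃₁ be nonzero real numbers, and let θ₁, θ₂, θ₃ ∈ [0, π], φ₁, φ₂, φ₃ ∈ ℝ satisfy the chain of equalities m₁ m₂ U₁₂ sin θ₁ sin θ₂ sin(φ₁ − φ₂) = m₂ m₃ U₂₃ sin θ₂ sin θ₃ sin(φ₂ − φ₃) = m₃ m₁ U₃₁ sin θ₃ sin θ₁ sin(φ₃ − φ₁). If one of the three products sin θ_i sin θ_j sin(φ_i − φ_j) (for (i,j) = (1,2), (2,3), (3,1)) is zero, then all three are zero, and moreover there exists φ ∈ ℝ such that for each k = 1,2,3 either sin θ_k = 0 or sin(φ_k − φ) = 0 (i.e., the three bodies lie on a common meridian). -/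
open Real

/-- If in the chain of azimuthal equations of motion one of the products
`sin θ_i sin θ_j sin(φ_i − φ_j)` vanishes, then all three vanish and the three
bodies lie on a common meridian. -/
theorem meridian_of_vanishing_product
    (m₁ m₂ m₃ : ℝ) (hm₁ : 0 < m₁) (hm₂ : 0 < m₂) (hm₃ : 0 < m₃)
    (U₁₂ U₂₃ U₃₁ : ℝ) (hU₁₂ : U₁₂ ≠ 0) (hU₂₃ : U₂₃ ≠ 0) (hU₃₁ : U₃₁ ≠ 0)
    (θ₁ θ₂ θ₃ : ℝ)
    (hθ₁ : θ₁ ∈ Set.Icc 0 π) (hθ₂ : θ₂ ∈ Set.Icc 0 π) (hθ₃ : θ₃ ∈ Set.Icc 0 π)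
    (φ₁ φ₂ φ₃ : ℝ)
    (h₁ : m₁ * m₂ * U₁₂ * sin θ₁ * sin θ₂ * sin (φ₁ - φ₂)
        = m₂ * m₃ * U₂₃ * sin θ₂ * sin θ₃ * sin (φ₂ - φ₃))
    (h₂ : m₂ * m₃ * U₂₃ * sin θ₂ * sin θ₃ * sin (φ₂ - φ₃)
        = m₃ * m₁ * U₃₁ * sin θ₃ * sin θ₁ * sin (φ₃ - φ₁))
    (hzero : sin θ₁ * sin θ₂ * sin (φ₁ - φ₂) = 0 ∨
             sin θ₂ * sin θ₃ * sin (φ₂ - φ₃) = 0 ∨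
             sin θ₃ * sin θ₁ * sin (φ₃ - φ₁) = 0) :
    (sin θ₁ * sin θ₂ * sin (φ₁ - φ₂) = 0 ∧
     sin θ₂ * sin θ₃ * sin (φ₂ - φ₃) = 0 ∧
     sin θ₃ * sin θ₁ * sin (φ₃ - φ₁) = 0) ∧
    ∃ φ : ℝ,
      (sin θ₁ = 0 ∨ sin (φ₁ - φ) = 0) ∧
      (sin θ₂ = 0 ∨ sin (φ₂ - φ) = 0) ∧
      (sin θ₃ = 0 ∨ sin (φ₃ - φ) = 0) := by
  have k12 : m₁ * m₂ * U₁₂ ≠ 0 := by positivity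
  have k23 : m₂ * m₃ * U₂₃ ≠ 0 := by positivity
  have k31 : m₃ * m₁ * U₃₁ ≠ 0 := by positivity
  have e₁ : (m₁ * m₂ * U₁₂) * (sin θ₁ * sin θ₂ * sin (φ₁ - φ₂))
      = (m₂ * m₃ * U₂₃) * (sin θ₂ * sin θ₃ * sin (φ₂ - φ₃)) := by linarith
  have e₂ : (m₂ * m₃ * U₂₃) * (sin θ₂ * sin θ₃ * sin (φ₂ - φ₃))
      = (m₃ * m₁ * U₃₁) * (sin θ₃ * sin θ₁ * sin (φ₃ - φ₁)) := by linarith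
  have hall : sin θ₁ * sin θ₂ * sin (φ₁ - φ₂) = 0 ∧
      sin θ₂ * sin θ₃ * sin (φ₂ - φ₃) = 0 ∧
      sin θ₃ * sin θ₁ * sin (φ₃ - φ₁) = 0 := by
    generalize sin θ₁ * sin θ₂ * sin (φ₁ - φ₂) = a at *
    generalize sin θ₂ * sin θ₃ * sin (φ₂ - φ₃) = b at *
    generalize sin θ₃ * sin θ₁ * sin (φ₃ - φ₁) = c at *
    have hb : b = 0 := by
      rcases hzero with h | h | h
      · rw [h, mul_zero] at e₁
        exact (mul_eq_zero.mp e₁.symm).resolve_left k23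
      · exact h
      · rw [h, mul_zero] at e₂
        exact (mul_eq_zero.mp e₂).resolve_left k23
    rw [hb, mul_zero] at e₁ e₂
    exact ⟨(mul_eq_zero.mp e₁).resolve_left k12, hb,
      (mul_eq_zero.mp e₂.symm).resolve_left k31⟩
  refine ⟨hall, ?_⟩
  obtain ⟨ha, hb, hc⟩ := hall
  by_cases s1 : sin θ₁ = 0
  · by_cases s2 : sin θ₂ = 0
    · exact ⟨φ₃, Or.inl s1, Or.inl s2, Or.inr (by simp)⟩
    · refine ⟨φ₂, Or.inl s1, Or.inr (by simp), ?_⟩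
      have hs : sin (φ₃ - φ₂) = -sin (φ₂ - φ₃) := by rw [← sin_neg, neg_sub]
      rw [hs, neg_eq_zero]
      simpa [s2] using hb
  · refine ⟨φ₁, Or.inr (by simp), ?_, ?_⟩
    · have hs : sin (φ₂ - φ₁) = -sin (φ₁ - φ₂) := by rw [← sin_neg, neg_sub]
      rw [hs, neg_eq_zero]
      simpa [s1] using ha
    · simpa [s1] using hc
end

section
/- Let m₁, m₂, m₃ > 0, let U₁₂, U₂₃, U₃₁ be real numbers, and let θ₁, θ₂, θ₃ ∈ (0, π), φ₁, φ₂, φ₃ ∈ ℝ with sin θ_k > 0 for all k and sin(φ₁ − φ₂), sin(φ₂ − φ₃), sin(φ₃ − φ₁) all nonzero. Assume the chain of equalities m₁ m₂ U₁₂ sin θ₁ sin θ₂ sin(φ₁ − φ₂) = m₂ m₃ U₂₃ sin θ₂ sin θ₃ sin(φ₂ − φ₃) = m₃ m₁ U₃₁ sin θ₃ sin θ₁ sin(φ₃ − φ₁), and the angular momentum conditions Σ_k m_k sin θ_k cos θ_k cos φ_k = 0 and Σ_k m_k sin θ_k cos θ_k sin φ_k = 0. Then U₁₂ cos θ₃ =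 U₂₃ cos θ₁ = U₃₁ cos θ₂. -/
open Real

/-- For an extended Lagrangian configuration, the azimuthal equations of motion
together with the vanishing of the `x`- and `y`-components of the angular
momentum imply `U₁₂ cos θ₃ = U₂₃ cos θ₁ = U₃₁ cos θ₂`. -/
theorem lagrangian_chain_condition
    (m₁ m₂ m₃ : ℝ) (hm₁ : 0 < m₁) (hm₂ : 0 < m₂) (hm₃ : 0 < m₃)
    (U₁₂ U₂₃ U₃₁ : ℝ)
    (θ₁ θ₂ θ₃ : ℝ)
    (hθ₁ : θ₁ ∈ Set.Ioo 0 π) (hθ₂ : θ₂ ∈ Set.Ioo 0 π) (hθ₃ : θ₃ ∈ Set.Ioo 0 π)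
    (hs₁ : 0 < sin θ₁) (hs₂ : 0 < sin θ₂) (hs₃ : 0 < sin θ₃)
    (φ₁ φ₂ φ₃ : ℝ)
    (hφ₁₂ : sin (φ₁ - φ₂) ≠ 0) (hφ₂₃ : sin (φ₂ - φ₃) ≠ 0)
    (hφ₃₁ : sin (φ₃ - φ₁) ≠ 0)
    (h₁ : m₁ * m₂ * U₁₂ * sin θ₁ * sin θ₂ * sin (φ₁ - φ₂)
        = m₂ * m₃ * U₂₃ * sin θ₂ * sin θ₃ * sin (φ₂ - φ₃))
    (h₂ : m₂ * m₃ * U₂₃ * sin θ₂ * sin θ₃ * sin (φ₂ - φ₃)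
        = m₃ * m₁ * U₃₁ * sin θ₃ * sin θ₁ * sin (φ₃ - φ₁))
    (hx : m₁ * sin θ₁ * cos θ₁ * cos φ₁ + m₂ * sin θ₂ * cos θ₂ * cos φ₂
        + m₃ * sin θ₃ * cos θ₃ * cos φ₃ = 0)
    (hy : m₁ * sin θ₁ * cos θ₁ * sin φ₁ + m₂ * sin θ₂ * cos θ₂ * sin φ₂
        + m₃ * sin θ₃ * cos θ₃ * sin φ₃ = 0) :
    U₁₂ * cos θ₃ = U₂₃ * cos θ₁ ∧ U₂₃ * cos θ₁ = U₃₁ * cos θ₂ := by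
  have A : m₁ * sin θ₁ * cos θ₁ * sin (φ₁ - φ₂) = m₃ * sin θ₃ * cos θ₃ * sin (φ₂ - φ₃) := by
    rw [sin_sub, sin_sub]
    linear_combination cos φ₂ * hy - sin φ₂ * hx
  have B : m₂ * sin θ₂ * cos θ₂ * sin (φ₂ - φ₃) = m₁ * sin θ₁ * cos θ₁ * sin (φ₃ - φ₁) := by
    rw [sin_sub, sin_sub]
    linear_combination cos φ₃ * hy - sin φ₃ * hx
  constructor
  · have hne : m₁ * m₂ * sin θ₁ * sin θ₂ * sin (φ₁ - φ₂) ≠ 0 :=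
      mul_ne_zero (by positivity) hφ₁₂
    apply mul_left_cancel₀ hne
    linear_combination cos θ₃ * h₁ - U₂₃ * m₂ * sin θ₂ * A
  · have hne : m₂ * m₃ * sin θ₂ * sin θ₃ * sin (φ₂ - φ₃) ≠ 0 :=
      mul_ne_zero (by positivity) hφ₂₃
    apply mul_left_cancel₀ hne
    linear_combination cos θ₁ * h₂ - U₃₁ * m₃ * sin θ₃ * B
end

section
/- Let m₁, m₂, m₃ > 0, θ_k, φ_k ∈ ℝ, γ ∈ ℝ, and assume the angular momentum conditions Σ_k m_k sin θ_k cos θ_k cos φ_k = 0 and Σ_k m_k sin θ_k cos θ_k sin φ_k = 0. Then 2 Σ_{i ∈ {2,3}} m₁ m_i (−γ cos θ₁ cos θ_i) (sin θ₁ cos θ_i − cos θ₁ sin θ_i cos(φ₁ − φ_i)) = −2γ m₁ sin θ₁ cos θ₁ · Σ_{k=1}^{3} m_k cos²θ_k. Consequently, if moreover sin θ₁ cos θ₁ ≠ 0, then the equation −ω² m₁ sin θ₁ cos θ₁ = 2 Σ_{i ∈ {2,3}} m₁ m_i (−γ cos θ₁ cos θ_i)(sin θ₁ cos θ_i − cos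 θ₁ sin θ_i cos(φ₁ − φ_i)) holds if and only if ω² = 2γ Σ_k m_k cos²θ_k. -/
open Real

/-- With the angular momentum conditions, substituting
`U'(D_{1i}²) = −γ cos θ₁ cos θ_i` into the equation of motion for `θ₁`
collapses it to `−2γ m₁ sin θ₁ cos θ₁ Σ_k m_k cos²θ_k`; consequently, when
`sin θ₁ cos θ₁ ≠ 0` the equation of motion holds iff
`ω² = 2γ Σ_k m_k cos²θ_k`. -/
theorem theta1_equation_determines_gamma
    (m₁ m₂ m₃ : ℝ) (hm₁ : 0 < m₁) (hm₂ : 0 < m₂) (hm₃ : 0 < m₃)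
    (θ₁ θ₂ θ₃ φ₁ φ₂ φ₃ γ ω : ℝ)
    (hx : m₁ * sin θ₁ * cos θ₁ * cos φ₁ + m₂ * sin θ₂ * cos θ₂ * cos φ₂
        + m₃ * sin θ₃ * cos θ₃ * cos φ₃ = 0)
    (hy : m₁ * sin θ₁ * cos θ₁ * sin φ₁ + m₂ * sin θ₂ * cos θ₂ * sin φ₂
        + m₃ * sin θ₃ * cos θ₃ * sin φ₃ = 0) :
    (2 * (m₁ * m₂ * (-γ * cos θ₁ * cos θ₂)
            * (sin θ₁ * cos θ₂ - cos θ₁ * sin θ₂ * cos (φ₁ - φ₂))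
        + m₁ * m₃ * (-γ * cos θ₁ * cos θ₃)
            * (sin θ₁ * cos θ₃ - cos θ₁ * sin θ₃ * cos (φ₁ - φ₃)))
      = -(2 * γ) * m₁ * sin θ₁ * cos θ₁
          * (m₁ * cos θ₁ ^ 2 + m₂ * cos θ₂ ^ 2 + m₃ * cos θ₃ ^ 2)) ∧
    (sin θ₁ * cos θ₁ ≠ 0 →
      ((-ω ^ 2 * m₁ * sin θ₁ * cos θ₁
          = 2 * (m₁ * m₂ * (-γ * cos θ₁ * cos θ₂)
              * (sin θ₁ * cos θ₂ - cos θ₁ * sin θ₂ * cos (φ₁ - φ₂))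
            + m₁ * m₃ * (-γ * cos θ₁ * cos θ₃)
              * (sin θ₁ * cos θ₃ - cos θ₁ * sin θ₃ * cos (φ₁ - φ₃)))) ↔
        ω ^ 2 = 2 * γ * (m₁ * cos θ₁ ^ 2 + m₂ * cos θ₂ ^ 2
          + m₃ * cos θ₃ ^ 2))) := by
  have key : 2 * (m₁ * m₂ * (-γ * cos θ₁ * cos θ₂)
            * (sin θ₁ * cos θ₂ - cos θ₁ * sin θ₂ * cos (φ₁ - φ₂))
        + m₁ * m₃ * (-γ * cos θ₁ * cos θ₃)
            * (sin θ₁ * cos θ₃ - cos θ₁ * sin θ₃ * cos (φ₁ - φ₃)))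
      = -(2 * γ) * m₁ * sin θ₁ * cos θ₁
          * (m₁ * cos θ₁ ^ 2 + m₂ * cos θ₂ ^ 2 + m₃ * cos θ₃ ^ 2) := by
    rw [cos_sub, cos_sub]
    linear_combination (2 * γ * m₁ * cos θ₁ ^ 2) * (cos φ₁ * hx + sin φ₁ * hy)
      - 2 * γ * m₁ * cos θ₁ ^ 2 * (m₁ * sin θ₁ * cos θ₁) * sin_sq_add_cos_sq φ₁
  refine ⟨key, fun h => ?_⟩
  rw [key]
  constructor
  · intro e
    apply mul_left_cancel₀ (mul_ne_zero hm₁.ne' h)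
    linear_combination -e
  · intro e
    linear_combination (-(m₁ * (sin θ₁ * cos θ₁))) * e
end

section
/- Let m₁, m₂, m₃ > 0, ω ≠ 0, θ_k ∈ (0, π) with sin θ_k > 0 and cos θ_k ≠ 0 for all k, φ_k ∈ ℝ, and γ ∈ ℝ. Assume: (i) U_ij = −γ cos θ_i cos θ_j for all pairs (i,j) ∈ {(1,2),(2,3),(3,1)}; (ii) the angular momentum conditions Σ_k m_k sin θ_k cos θ_k cos φ_k = 0 and Σ_k m_k sin θ_k cos θ_k sin φ_k = 0; (iii) the equation of motion −ω² m₁ sin θ₁ cos θ₁ = 2 Σ_{i ∈ {2,3}} m₁ m_i U_{1i} (sin θ₁ cos θ_i − cos θ₁ sin θ_i cos(φ₁ − φ_i)); and (iv) cos θ_i cos θ_j > 0 for all pairs. Then U_ij < 0 for every pair (i,j). In particular, a repulsive force, for which U'(D²) > 0, admits no extended Lagrangian relative equilibrium on S². -/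
open Real

/-- For an extended Lagrangian relative equilibrium the force must be
attractive: under the conditions (i)–(iv), all `U_ij` are negative. In
particular a repulsive force (`U' > 0`) admits no extended Lagrangian relative
equilibrium on the sphere. -/
theorem no_repulsive_lagrangian_RE
    (m₁ m₂ m₃ : ℝ) (hm₁ : 0 < m₁) (hm₂ : 0 < m₂) (hm₃ : 0 < m₃)
    (ω : ℝ) (hω : ω ≠ 0)
    (θ₁ θ₂ θ₃ : ℝ)
    (hθ₁ : θ₁ ∈ Set.Ioo 0 π) (hθ₂ : θ₂ ∈ Set.Ioo 0 π) (hθ₃ : θ₃ ∈ Set.Ioo 0 π)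
    (hs₁ : 0 < sin θ₁) (hs₂ : 0 < sin θ₂) (hs₃ : 0 < sin θ₃)
    (hc₁ : cos θ₁ ≠ 0) (hc₂ : cos θ₂ ≠ 0) (hc₃ : cos θ₃ ≠ 0)
    (φ₁ φ₂ φ₃ γ U₁₂ U₂₃ U₃₁ : ℝ)
    (hU₁₂ : U₁₂ = -γ * cos θ₁ * cos θ₂)
    (hU₂₃ : U₂₃ = -γ * cos θ₂ * cos θ₃)
    (hU₃₁ : U₃₁ = -γ * cos θ₃ * cos θ₁)
    (hx : m₁ * sin θ₁ * cos θ₁ * cos φ₁ + m₂ * sin θ₂ * cos θ₂ * cos φ₂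
        + m₃ * sin θ₃ * cos θ₃ * cos φ₃ = 0)
    (hy : m₁ * sin θ₁ * cos θ₁ * sin φ₁ + m₂ * sin θ₂ * cos θ₂ * sin φ₂
        + m₃ * sin θ₃ * cos θ₃ * sin φ₃ = 0)
    (heom : -ω ^ 2 * m₁ * sin θ₁ * cos θ₁
        = 2 * (m₁ * m₂ * U₁₂
              * (sin θ₁ * cos θ₂ - cos θ₁ * sin θ₂ * cos (φ₁ - φ₂))
            + m₁ * m₃ * U₃₁
              * (sin θ₁ * cos θ₃ - cos θ₁ * sin θ₃ * cos (φ₁ - φ₃))))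
    (hhem₁₂ : 0 < cos θ₁ * cos θ₂)
    (hhem₂₃ : 0 < cos θ₂ * cos θ₃)
    (hhem₃₁ : 0 < cos θ₃ * cos θ₁) :
    U₁₂ < 0 ∧ U₂₃ < 0 ∧ U₃₁ < 0 := by
  have hA : m₁ * sin θ₁ * cos θ₁ + m₂ * sin θ₂ * cos θ₂ * cos (φ₁ - φ₂)
      + m₃ * sin θ₃ * cos θ₃ * cos (φ₁ - φ₃) = 0 := by
    rw [cos_sub, cos_sub]
    linear_combination cos φ₁ * hx + sin φ₁ * hy
      - m₁ * sin θ₁ * cos θ₁ * sin_sq_add_cos_sq φ₁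
  have hne : m₁ * sin θ₁ * cos θ₁ ≠ 0 := by positivity
  have hkey : ω ^ 2 = 2 * γ * (m₁ * cos θ₁ ^ 2 + m₂ * cos θ₂ ^ 2 + m₃ * cos θ₃ ^ 2) := by
    apply mul_left_cancel₀ hne
    rw [hU₁₂, hU₃₁] at heom
    linear_combination -heom - 2 * γ * m₁ * cos θ₁ ^ 2 * hA
  have hS : 0 < m₁ * cos θ₁ ^ 2 + m₂ * cos θ₂ ^ 2 + m₃ * cos θ₃ ^ 2 := by positivity
  have hw : 0 < ω ^ 2 := by positivity
  have hg : 0 < γ := by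
    by_contra h
    nlinarith [mul_nonneg (neg_nonneg.mpr (not_lt.mp h)) hS.le]
  refine ⟨?_, ?_, ?_⟩
  · rw [hU₁₂]; nlinarith [mul_pos hg hhem₁₂]
  · rw [hU₂₃]; nlinarith [mul_pos hg hhem₂₃]
  · rw [hU₃₁]; nlinarith [mul_pos hg hhem₃₁]
end

section
/- Let m₁, m₂, m₃ > 0, σ₃₁, σ₂₃ ∈ (0, π), and α ∈ ℝ, and set c₁₂ := cos σ₃₁ cos σ₂₃ + sin σ₃₁ sin σ₂₃ cos α. Place the three bodies at the unit vectors p₁ = (sin σ₃₁, 0, cos σ₃₁), p₂ = (sin σ₂₃ cos α, sin σ₂₃ sin α, cos σ₂₃), p₃ = (0, 0, 1), and let I be the 3×3 inertia matrix I = Σ_k m_k (‖p_k‖² · Id − p_k p_kᵀ). Then the characteristic polynomial of I is det(λ·Id − I) = (λ − (m₁+m₂))(λ − (m₂+m₃))(λ − (m₃+m₁)) − (λ − (m₁+m₂)) m₁ m₂ c₁₂² − (λ − (m₂+m₃)) m₂ m₃ cos²σ₂₃ − (λ − (m₃+m₁)) m₃ m₁ cos²σ₃₁ + 2 m₁ m₂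 m₃ c₁₂ cos σ₂₃ cos σ₃₁. -/
open Real Matrix

/-- Determinant of a scalar matrix plus a weighted sum of three rank-one matrices, written
through the Gram matrix of the three vectors. -/
theorem gram_det (t m₁ m₂ m₃ a b c d e f g h k : ℝ) :
    (t • (1 : Matrix (Fin 3) (Fin 3) ℝ) + m₁ • vecMulVec ![a, b, c] ![a, b, c]
      + m₂ • vecMulVec ![d, e, f] ![d, e, f] + m₃ • vecMulVec ![g, h, k] ![g, h, k]).det
      = (t + m₁ * (a ^ 2 + b ^ 2 + c ^ 2)) * (t + m₂ * (d ^ 2 + e ^ 2 + f ^ 2))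
          * (t + m₃ * (g ^ 2 + h ^ 2 + k ^ 2))
        - (t + m₃ * (g ^ 2 + h ^ 2 + k ^ 2)) * (m₁ * m₂ * (a * d + b * e + c * f) ^ 2)
        - (t + m₁ * (a ^ 2 + b ^ 2 + c ^ 2)) * (m₂ * m₃ * (d * g + e * h + f * k) ^ 2)
        - (t + m₂ * (d ^ 2 + e ^ 2 + f ^ 2)) * (m₃ * m₁ * (a * g + b * h + c * k) ^ 2)
        + 2 * m₁ * m₂ * m₃ * (a * d + b * e + c * f) * (d * g + e * h + f * k)
          * (a * g + b * h + c * k) := by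
  rw [Matrix.det_fin_three]
  simp [vecMulVec_apply, Matrix.one_apply]
  ring

/-- The characteristic polynomial of the inertia tensor of three bodies placed
on the unit sphere at `p₁ = (sin σ₃₁, 0, cos σ₃₁)`,
`p₂ = (sin σ₂₃ cos α, sin σ₂₃ sin α, cos σ₂₃)`, `p₃ = (0,0,1)`, with
`c₁₂ = cos σ₃₁ cos σ₂₃ + sin σ₃₁ sin σ₂₃ cos α`. -/
theorem inertia_tensor_charpoly
    (m₁ m₂ m₃ : ℝ) (hm₁ : 0 < m₁) (hm₂ : 0 < m₂) (hm₃ : 0 < m₃)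
    (σ₃₁ σ₂₃ : ℝ) (hσ₃₁ : σ₃₁ ∈ Set.Ioo 0 π) (hσ₂₃ : σ₂₃ ∈ Set.Ioo 0 π)
    (α : ℝ)
    (c₁₂ : ℝ) (hc₁₂ : c₁₂ = cos σ₃₁ * cos σ₂₃ + sin σ₃₁ * sin σ₂₃ * cos α)
    (p₁ p₂ p₃ : Fin 3 → ℝ)
    (hp₁ : p₁ = ![sin σ₃₁, 0, cos σ₃₁])
    (hp₂ : p₂ = ![sin σ₂₃ * cos α, sin σ₂₃ * sin α, cos σ₂₃])
    (hp₃ : p₃ = ![0, 0, 1])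
    (I : Matrix (Fin 3) (Fin 3) ℝ)
    (hI : I = m₁ • ((∑ i, p₁ i ^ 2) • (1 : Matrix (Fin 3) (Fin 3) ℝ)
                  - vecMulVec p₁ p₁)
            + m₂ • ((∑ i, p₂ i ^ 2) • (1 : Matrix (Fin 3) (Fin 3) ℝ)
                  - vecMulVec p₂ p₂)
            + m₃ • ((∑ i, p₃ i ^ 2) • (1 : Matrix (Fin 3) (Fin 3) ℝ)
                  - vecMulVec p₃ p₃)) :
    ∀ lam : ℝ,
      (lam • (1 : Matrix (Fin 3) (Fin 3) ℝ) - I).det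
        = (lam - (m₁ + m₂)) * (lam - (m₂ + m₃)) * (lam - (m₃ + m₁))
          - (lam - (m₁ + m₂)) * (m₁ * m₂ * c₁₂ ^ 2)
          - (lam - (m₂ + m₃)) * (m₂ * m₃ * cos σ₂₃ ^ 2)
          - (lam - (m₃ + m₁)) * (m₃ * m₁ * cos σ₃₁ ^ 2)
          + 2 * m₁ * m₂ * m₃ * c₁₂ * cos σ₂₃ * cos σ₃₁ := by
  intro lam
  have n1 : sin σ₃₁ ^ 2 + 0 ^ 2 + cos σ₃₁ ^ 2 = 1 := by
    have := sin_sq_add_cos_sq σ₃₁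
    linarith
  have n2 : (sin σ₂₃ * cos α) ^ 2 + (sin σ₂₃ * sin α) ^ 2 + cos σ₂₃ ^ 2 = 1 := by
    have h1 := sin_sq_add_cos_sq σ₂₃
    have h2 := sin_sq_add_cos_sq α
    linear_combination h1 + sin σ₂₃ ^ 2 * h2
  have e1 : ∑ i, p₁ i ^ 2 = 1 := by
    rw [hp₁, Fin.sum_univ_three]; simpa using n1
  have e2 : ∑ i, p₂ i ^ 2 = 1 := by
    rw [hp₂, Fin.sum_univ_three]; simpa using n2
  have e3 : ∑ i, p₃ i ^ 2 = 1 := by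
    rw [hp₃, Fin.sum_univ_three]; simp
  have key := gram_det (lam - (m₁ + m₂ + m₃)) m₁ m₂ m₃ (sin σ₃₁) 0 (cos σ₃₁)
    (sin σ₂₃ * cos α) (sin σ₂₃ * sin α) (cos σ₂₃) 0 0 1
  rw [n1, n2] at key
  have hc : sin σ₃₁ * (sin σ₂₃ * cos α) + 0 * (sin σ₂₃ * sin α) + cos σ₃₁ * cos σ₂₃ = c₁₂ := by
    rw [hc₁₂]; ring
  rw [hc] at key
  have hM : lam • (1 : Matrix (Fin 3) (Fin 3) ℝ) - I
      = (lam - (m₁ + m₂ + m₃)) • (1 : Matrix (Fin 3) (Fin 3) ℝ)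
        + m₁ • vecMulVec p₁ p₁ + m₂ • vecMulVec p₂ p₂ + m₃ • vecMulVec p₃ p₃ := by
    rw [hI, e1, e2, e3]
    module
  rw [hM, hp₁, hp₂, hp₃, key]
  ring
end

section
/- Let m₁, m₂, m₃ > 0 and θ_k, φ_k ∈ ℝ for k = 1, 2, 3. Define cos σ_ij := cos θ_i cos θ_j + sin θ_i sin θ_j cos(φ_i − φ_j) for each pair, and assume the angular momentum conditions Σ_k m_k sin θ_k cos θ_k cos φ_k = 0 and Σ_k m_k sin θ_k cos θ_k sin φ_k = 0. Let J be the 3×3 real symmetric matrix with diagonal entries J₁₁ = m₂ + m₃, J₂₂ = m₃ + m₁, J₃₃ = m₁ + m₂ and off-diagonal entries J_ij = −√(m_i m_j) cos σ_ij for i ≠ j. Then the vector v = (√m₁ cos θ₁, √m₂ cos θ₂, √m₃ cos θ₃)ᵀ satisfies J v = λ v with λ = Σ_{l=1}^{3} m_l sin²θ_l. -/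
open Real Matrix

/-- Under the angular momentum conditions, the vector
`(√m₁ cos θ₁, √m₂ cos θ₂, √m₃ cos θ₃)` is an eigenvector of the mass-symmetric
inertia matrix `J` with eigenvalue `λ = Σ_l m_l sin²θ_l`. -/
theorem J_eigenvector
    (m₁ m₂ m₃ : ℝ) (hm₁ : 0 < m₁) (hm₂ : 0 < m₂) (hm₃ : 0 < m₃)
    (θ₁ θ₂ θ₃ φ₁ φ₂ φ₃ : ℝ)
    (c₁₂ c₂₃ c₃₁ : ℝ)
    (hc₁₂ : c₁₂ = cos θ₁ * cos θ₂ + sin θ₁ * sin θ₂ * cos (φ₁ - φ₂))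
    (hc₂₃ : c₂₃ = cos θ₂ * cos θ₃ + sin θ₂ * sin θ₃ * cos (φ₂ - φ₃))
    (hc₃₁ : c₃₁ = cos θ₃ * cos θ₁ + sin θ₃ * sin θ₁ * cos (φ₃ - φ₁))
    (hx : m₁ * sin θ₁ * cos θ₁ * cos φ₁ + m₂ * sin θ₂ * cos θ₂ * cos φ₂
        + m₃ * sin θ₃ * cos θ₃ * cos φ₃ = 0)
    (hy : m₁ * sin θ₁ * cos θ₁ * sin φ₁ + m₂ * sin θ₂ * cos θ₂ * sin φ₂
        + m₃ * sin θ₃ * cos θ₃ * sin φ₃ = 0)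
    (J : Matrix (Fin 3) (Fin 3) ℝ)
    (hJ : J = !![m₂ + m₃, -Real.sqrt (m₁ * m₂) * c₁₂, -Real.sqrt (m₁ * m₃) * c₃₁;
                 -Real.sqrt (m₂ * m₁) * c₁₂, m₃ + m₁, -Real.sqrt (m₂ * m₃) * c₂₃;
                 -Real.sqrt (m₃ * m₁) * c₃₁, -Real.sqrt (m₃ * m₂) * c₂₃, m₁ + m₂])
    (v : Fin 3 → ℝ)
    (hv : v = ![Real.sqrt m₁ * cos θ₁, Real.sqrt m₂ * cos θ₂,
                Real.sqrt m₃ * cos θ₃]) :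
    J.mulVec v
      = (m₁ * sin θ₁ ^ 2 + m₂ * sin θ₂ ^ 2 + m₃ * sin θ₃ ^ 2) • v := by
  obtain ⟨a, ha, rfl⟩ : ∃ a : ℝ, 0 ≤ a ∧ m₁ = a ^ 2 := ⟨√m₁, sqrt_nonneg _, (sq_sqrt hm₁.le).symm⟩
  obtain ⟨b, hb, rfl⟩ : ∃ a : ℝ, 0 ≤ a ∧ m₂ = a ^ 2 := ⟨√m₂, sqrt_nonneg _, (sq_sqrt hm₂.le).symm⟩
  obtain ⟨c, hc, rfl⟩ : ∃ a : ℝ, 0 ≤ a ∧ m₃ = a ^ 2 := ⟨√m₃, sqrt_nonneg _, (sq_sqrt hm₃.le).symm⟩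
  have T1 := sin_sq_add_cos_sq θ₁
  have T2 := sin_sq_add_cos_sq θ₂
  have T3 := sin_sq_add_cos_sq θ₃
  have P1 := sin_sq_add_cos_sq φ₁
  have P2 := sin_sq_add_cos_sq φ₂
  have P3 := sin_sq_add_cos_sq φ₃
  have hs : ∀ x y : ℝ, 0 ≤ x → 0 ≤ y → √(x ^ 2 * y ^ 2) = x * y := by
    intro x y h1 h2
    rw [← mul_pow, sqrt_sq (mul_nonneg h1 h2)]
  rw [hs a b ha hb, hs a c ha hc, hs b a hb ha, hs b c hb hc, hs c a hc ha, hs c b hc hb] at hJ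
  rw [sqrt_sq ha, sqrt_sq hb, sqrt_sq hc] at hv
  rw [cos_sub] at hc₁₂ hc₂₃ hc₃₁
  subst hJ hv hc₁₂ hc₂₃ hc₃₁
  ext i
  fin_cases i
  · simp [Matrix.mulVec, dotProduct, Fin.sum_univ_three]
    linear_combination a * (-sin θ₁ * (cos φ₁ * hx + sin φ₁ * hy)
      + a ^ 2 * sin θ₁ ^ 2 * cos θ₁ * P1
      - cos θ₁ * b ^ 2 * T2 - cos θ₁ * c ^ 2 * T3)
  · simp [Matrix.mulVec, dotProduct, Fin.sum_univ_three]
    linear_combination b * (-sin θ₂ * (cos φ₂ * hx + sin φ₂ * hy)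
      + b ^ 2 * sin θ₂ ^ 2 * cos θ₂ * P2
      - cos θ₂ * a ^ 2 * T1 - cos θ₂ * c ^ 2 * T3)
  · simp [Matrix.mulVec, dotProduct, Fin.sum_univ_three]
    linear_combination c * (-sin θ₃ * (cos φ₃ * hx + sin φ₃ * hy)
      + c ^ 2 * sin θ₃ ^ 2 * cos θ₃ * P3
      - cos θ₃ * b ^ 2 * T2 - cos θ₃ * a ^ 2 * T1)
end

section
/- Let m₁, m₂, m₃ > 0 and σ ∈ ℝ with cos σ ≠ 1. Let J be the 3×3 real symmetric matrix with diagonal entries J₁₁ = m₂ + m₃, J₂₂ = m₃ + m₁, J₃₃ = m₁ + m₂ and off-diagonal entries J_ij = −√(m_i m_j) cos σ for i ≠ j. If the vector (√m₁, √m₂, √m₃)ᵀ is an eigenvector of J, i.e., J(√m₁, √m₂, √m₃)ᵀ = λ(√m₁, √m₂, √m₃)ᵀ for some λ ∈ ℝ, then m₁ = m₂ = m₃ and λ = 2m₁(1 − cos σ). In particular, an equilateral triangle on S² is an extended Lagrangian rigid rotator only for equal masses. -/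
open Real Matrix

/-- An equilateral triangle on the sphere is an extended Lagrangian rigid
rotator only for equal masses: if `(√m₁, √m₂, √m₃)` is an eigenvector of the
inertia matrix `J` of an equilateral shape with `cos σ ≠ 1`, then
`m₁ = m₂ = m₃` and the eigenvalue is `2m₁(1 − cos σ)`. -/
theorem equilateral_needs_equal_masses
    (m₁ m₂ m₃ : ℝ) (hm₁ : 0 < m₁) (hm₂ : 0 < m₂) (hm₃ : 0 < m₃)
    (σ : ℝ) (hσ : cos σ ≠ 1)
    (J : Matrix (Fin 3) (Fin 3) ℝ)
    (hJ : J = !![m₂ + m₃, -Real.sqrt (m₁ * m₂) * cos σ,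
                   -Real.sqrt (m₁ * m₃) * cos σ;
                 -Real.sqrt (m₂ * m₁) * cos σ, m₃ + m₁,
                   -Real.sqrt (m₂ * m₃) * cos σ;
                 -Real.sqrt (m₃ * m₁) * cos σ, -Real.sqrt (m₃ * m₂) * cos σ,
                   m₁ + m₂])
    (lam : ℝ)
    (heig : J.mulVec ![Real.sqrt m₁, Real.sqrt m₂, Real.sqrt m₃]
        = lam • ![Real.sqrt m₁, Real.sqrt m₂, Real.sqrt m₃]) :
    m₁ = m₂ ∧ m₂ = m₃ ∧ lam = 2 * m₁ * (1 - cos σ) := by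
  have p₁ := Real.sqrt_pos.mpr hm₁
  have p₂ := Real.sqrt_pos.mpr hm₂
  have p₃ := Real.sqrt_pos.mpr hm₃
  have s₁ := Real.sq_sqrt hm₁.le
  have s₂ := Real.sq_sqrt hm₂.le
  have s₃ := Real.sq_sqrt hm₃.le
  have e₁ := congrFun heig 0
  have e₂ := congrFun heig 1
  have e₃ := congrFun heig 2
  subst hJ
  simp [Matrix.mulVec, dotProduct, Fin.sum_univ_three, Real.sqrt_mul hm₁.le,
    Real.sqrt_mul hm₂.le, Real.sqrt_mul hm₃.le] at e₁ e₂ e₃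
  have hc : 1 - cos σ ≠ 0 := sub_ne_zero.mpr (Ne.symm hσ)
  have f₁ : (m₂ + m₃) * (1 - cos σ) = lam := by
    apply mul_right_cancel₀ p₁.ne'
    linear_combination e₁ - √m₁ * cos σ * (- s₂ - s₃)
  have f₂ : (m₃ + m₁) * (1 - cos σ) = lam := by
    apply mul_right_cancel₀ p₂.ne'
    linear_combination e₂ - √m₂ * cos σ * (- s₁ - s₃)
  have f₃ : (m₁ + m₂) * (1 - cos σ) = lam := by
    apply mul_right_cancel₀ p₃.ne'
    linear_combination e₃ - √m₃ * cos σ * (- s₁ - s₂)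
  have h₁₂ : m₁ = m₂ := by
    apply mul_right_cancel₀ hc
    linear_combination f₂ - f₁
  have h₂₃ : m₂ = m₃ := by
    apply mul_right_cancel₀ hc
    linear_combination f₃ - f₂
  refine ⟨h₁₂, h₂₃, ?_⟩
  rw [← f₃, ← h₁₂]
  ring
end

section
/- Define q(σ, σ₁₂) = cos σ (2 sin⁶σ − sin⁶σ₁₂) − sin³σ cos σ₁₂ sin³σ₁₂. For σ ∈ (0, π), the two partial derivatives ∂q/∂σ and ∂q/∂σ₁₂ both vanish at the diagonal point (σ, σ₁₂) = (σ, σ) if and only if cos²σ = 1/10. (Moreover q(σ, σ) = 0 for all σ, so the diagonal lies on the curve q = 0, and these points are the crossing points of the solution curve.) -/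
open Real

/-- The function whose zero set describes the equal-mass isosceles rigid
rotators: `q(σ, σ₁₂) = cos σ (2 sin⁶σ − sin⁶σ₁₂) − sin³σ cos σ₁₂ sin³σ₁₂`. -/
noncomputable def q (σ σ₁₂ : ℝ) : ℝ :=
  Real.cos σ * (2 * Real.sin σ ^ 6 - Real.sin σ₁₂ ^ 6)
    - Real.sin σ ^ 3 * Real.cos σ₁₂ * Real.sin σ₁₂ ^ 3

/-- For `σ ∈ (0, π)`, both partial derivatives of `q` vanish at the diagonal
point `(σ, σ)` iff `cos²σ = 1/10`; moreover `q` vanishes identically on the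
diagonal, so these are the crossing points of the solution curve `q = 0`. -/
theorem q_saddle_points (σ : ℝ) (hσ : σ ∈ Set.Ioo 0 π) :
    ((deriv (fun s => q s σ) σ = 0 ∧ deriv (fun t => q σ t) σ = 0) ↔
      cos σ ^ 2 = 1 / 10) ∧
    (∀ s : ℝ, q s s = 0) := by
  have h1 : HasDerivAt (fun s => q s σ) (sin σ ^ 5 * (10 * cos σ ^ 2 - 1)) σ := by
    unfold q
    have hs := Real.hasDerivAt_sin σ
    have hc := Real.hasDerivAt_cos σ
    have h := (hc.mul (((hs.pow 6).const_mul 2).sub_const (sin σ ^ 6))).sub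
      (((hs.pow 3).mul_const (cos σ)).mul_const (sin σ ^ 3))
    refine h.congr_deriv ?_
    have e : sin σ ^ 2 = 1 - cos σ ^ 2 := Real.sin_sq σ
    simp only [Pi.pow_apply]
    push_cast
    linear_combination (-sin σ ^ 5) * e
  have h2 : HasDerivAt (fun t => q σ t) (-(sin σ ^ 5 * (10 * cos σ ^ 2 - 1))) σ := by
    unfold q
    have hs := Real.hasDerivAt_sin σ
    have hc := Real.hasDerivAt_cos σ
    have h := (((hs.pow 6).const_sub (2 * sin σ ^ 6)).const_mul (cos σ)).sub
      ((hc.const_mul (sin σ ^ 3)).mul (hs.pow 3))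
    refine h.congr_deriv ?_
    have e : sin σ ^ 2 = 1 - cos σ ^ 2 := Real.sin_sq σ
    simp only [Pi.pow_apply]
    push_cast
    linear_combination (sin σ ^ 5) * e
  have hpos : sin σ ^ 5 ≠ 0 := (pow_pos (Real.sin_pos_of_mem_Ioo hσ) 5).ne'
  refine ⟨?_, fun s => by unfold q; ring⟩
  rw [h1.deriv, h2.deriv, neg_eq_zero, and_self, mul_eq_zero, or_iff_right hpos]
  constructor <;> intro h <;> linarith
end

section
/- Define q(σ, σ₁₂) = cos σ (2 sin⁶σ − sin⁶σ₁₂) − sin³σ cos σ₁₂ sin³σ₁₂. Then for all σ ∈ ℝ, q(σ, 2σ) = −2 sin⁶σ cos σ (32 cos⁶σ + 8 cos⁴σ − 4 cos²σ − 1). Consequently, for σ ∈ (0, π/2), q(σ, 2σ) = 0 if and only if 32 cos⁶σ + 8 cos⁴σ − 4 cos²σ − 1 = 0. -/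
open Real

/-- On the boundary `σ₁₂ = 2σ` of the triangle region, the equal-mass
isosceles rigid rotator function factors as
`q(σ, 2σ) = −2 sin⁶σ cos σ (32 cos⁶σ + 8 cos⁴σ − 4 cos²σ − 1)`; hence for
`σ ∈ (0, π/2)` the endpoint equation `q(σ, 2σ) = 0` is equivalent to
`32 cos⁶σ + 8 cos⁴σ − 4 cos²σ − 1 = 0`. -/
theorem q_on_boundary :
    (∀ σ : ℝ,
      cos σ * (2 * sin σ ^ 6 - sin (2 * σ) ^ 6)
          - sin σ ^ 3 * cos (2 * σ) * sin (2 * σ) ^ 3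
        = -2 * sin σ ^ 6 * cos σ *
            (32 * cos σ ^ 6 + 8 * cos σ ^ 4 - 4 * cos σ ^ 2 - 1)) ∧
    (∀ σ : ℝ, σ ∈ Set.Ioo 0 (π / 2) →
      (cos σ * (2 * sin σ ^ 6 - sin (2 * σ) ^ 6)
          - sin σ ^ 3 * cos (2 * σ) * sin (2 * σ) ^ 3 = 0 ↔
        32 * cos σ ^ 6 + 8 * cos σ ^ 4 - 4 * cos σ ^ 2 - 1 = 0)) := by
  have key : ∀ σ : ℝ,
      cos σ * (2 * sin σ ^ 6 - sin (2 * σ) ^ 6)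
          - sin σ ^ 3 * cos (2 * σ) * sin (2 * σ) ^ 3
        = -2 * sin σ ^ 6 * cos σ *
            (32 * cos σ ^ 6 + 8 * cos σ ^ 4 - 4 * cos σ ^ 2 - 1) := by
    intro σ
    rw [sin_two_mul, cos_two_mul]
    ring
  refine ⟨key, ?_⟩
  rintro σ ⟨h0, h1⟩
  have hs : 0 < sin σ := sin_pos_of_pos_of_lt_pi h0 (by linarith [pi_pos])
  have hc : 0 < cos σ := cos_pos_of_mem_Ioo ⟨by linarith [pi_pos], h1⟩
  have hne : -2 * sin σ ^ 6 * cos σ ≠ 0 :=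
    mul_ne_zero (mul_ne_zero (by norm_num) (pow_ne_zero 6 hs.ne')) hc.ne'
  rw [key σ, mul_eq_zero]
  exact ⟨fun h => h.resolve_left hne, Or.inr⟩
end

section
/- Let σ ∈ ℝ with cos σ ≠ 0, sin σ ≠ 0, and 2 sin³σ cos σ ≠ 1, let ν ∈ ℝ with (1−ν)² + 8ν cos²σ ≥ 0, and let ε ∈ {+1, −1}. If 2 cos σ = sin³σ (1 − ν − ε √((1−ν)² + 8ν cos²σ)), then ν = (cos σ − sin³σ) / (sin³σ (2 sin³σ cos σ − 1)). -/
open Real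

/-- Solving the rigid rotator condition
`2 cos σ = sin³σ (1 − ν − ε √((1−ν)² + 8ν cos²σ))` for the mass ratio `ν`
gives `ν = (cos σ − sin³σ) / (sin³σ (2 sin³σ cos σ − 1))`. -/
theorem mass_ratio_formula
    (σ ν ε : ℝ)
    (hcos : cos σ ≠ 0) (hsin : sin σ ≠ 0)
    (hden : 2 * sin σ ^ 3 * cos σ ≠ 1)
    (hdisc : 0 ≤ (1 - ν) ^ 2 + 8 * ν * cos σ ^ 2)
    (hε : ε = 1 ∨ ε = -1)
    (heq : 2 * cos σ
        = sin σ ^ 3 *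
            (1 - ν - ε * Real.sqrt ((1 - ν) ^ 2 + 8 * ν * cos σ ^ 2))) :
    ν = (cos σ - sin σ ^ 3)
        / (sin σ ^ 3 * (2 * sin σ ^ 3 * cos σ - 1)) := by
  have hR := Real.sq_sqrt hdisc
  set R := Real.sqrt ((1 - ν) ^ 2 + 8 * ν * cos σ ^ 2)
  set c := cos σ
  have hs : sin σ ^ 3 ≠ 0 := pow_ne_zero 3 hsin
  generalize sin σ ^ 3 = s at *
  have hε2 : ε ^ 2 = 1 := by rcases hε with h | h <;> rw [h] <;> norm_num
  have h1 : s * (1 - ν) - 2 * c = s * (ε * R) := by linarith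
  have h2 : (s * (1 - ν) - 2 * c) ^ 2 = s ^ 2 * ((1 - ν) ^ 2 + 8 * ν * c ^ 2) := by
    rw [h1, mul_pow, mul_pow, hε2, hR, one_mul]
  have h3 : c * (ν * (s * (2 * s * c - 1)) - (c - s)) = 0 := by
    linear_combination (-1 / 4) * h2
  have h4 := (mul_eq_zero.mp h3).resolve_left hcos
  rw [eq_div_iff (mul_ne_zero hs (sub_ne_zero.mpr hden))]
  linarith
end
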